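/- arXiv:2410.00322 — 2 statements merged into one kernel-verified Lean document; each statement's English description precedes it below -/
import Mathlib

section
/- For any two weights 0 < w < w′ < 1, the unique θ* with L(w | θ*) = L(w′ | θ*) is given explicitly by θ* = (H(w′) − H(w)) / ( (H(w′) − H(w)) + (G(w) − G(w′)) ), and both the numerator and the denominator of this expression are strictly positive. -/
open MeasureTheory Set

/-- `Hfun f₁ f₂ w = E[X₂² · 1{(1−w)X₂² < wX₁²}]` for independent `X₁ ∼ f₁`, `X₂ ∼ f₂`,
written as a double integral against the product density. -/
noncomputable def Hfun (f₁ f₂ : ℝ → ℝ) (w : ℝ) : ℝ :=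
  ∫ x₁ : ℝ, (∫ x₂ : ℝ, (if (1 - w) * x₂ ^ 2 < w * x₁ ^ 2 then x₂ ^ 2 else 0) * f₂ x₂) * f₁ x₁

/-- `Gfun f₁ f₂ w = E[X₁² · 1{(1−w)X₂² ≥ wX₁²}]` for independent `X₁ ∼ f₁`, `X₂ ∼ f₂`,
written as a double integral against the product density. -/
noncomputable def Gfun (f₁ f₂ : ℝ → ℝ) (w : ℝ) : ℝ :=
  ∫ x₁ : ℝ, (∫ x₂ : ℝ, (if w * x₁ ^ 2 ≤ (1 - w) * x₂ ^ 2 then x₁ ^ 2 else 0) * f₂ x₂) * f₁ x₁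

/-- The receiver's expected loss `L(w ∣ θ) = θ·G(w) + (1−θ)·H(w)`. -/
noncomputable def Lfun (f₁ f₂ : ℝ → ℝ) (w θ : ℝ) : ℝ :=
  θ * Gfun f₁ f₂ w + (1 - θ) * Hfun f₁ f₂ w

/-- A probability density on `ℝ` that is continuous, everywhere positive, symmetric about `0`,
and has a finite second moment. -/
def GoodDensity (f : ℝ → ℝ) : Prop :=
  Continuous f ∧ (∀ x, 0 < f x) ∧ (∀ x, f (-x) = f x) ∧
    (∫ x : ℝ, f x) = 1 ∧ Integrable fun x : ℝ => x ^ 2 * f x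

lemma aux_key (f₁ f₂ : ℝ → ℝ) (hp₁ : ∀ x, 0 < f₁ x) (hp₂ : ∀ x, 0 < f₂ x)
    (A B : ℝ × ℝ → ℝ)
    (hA : Integrable (fun p : ℝ × ℝ => A p * f₂ p.2 * f₁ p.1) (volume.prod volume))
    (hB : Integrable (fun p : ℝ × ℝ => B p * f₂ p.2 * f₁ p.1) (volume.prod volume))
    (hAB : ∀ p, A p ≤ B p) (U : Set (ℝ × ℝ)) (hU : IsOpen U) (hne : U.Nonempty)
    (hlt : ∀ p ∈ U, A p < B p) :
    (∫ x, (∫ y, A (x, y) * f₂ y) * f₁ x) < ∫ x, (∫ y, B (x, y) * f₂ y) * f₁ x := by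
  have e : ∀ C : ℝ × ℝ → ℝ,
      Integrable (fun p : ℝ × ℝ => C p * f₂ p.2 * f₁ p.1) (volume.prod volume) →
      (∫ x, (∫ y, C (x, y) * f₂ y) * f₁ x) =
        ∫ p, C p * f₂ p.2 * f₁ p.1 ∂((volume : Measure ℝ).prod (volume : Measure ℝ)) := by
    intro C hC
    rw [integral_prod _ hC]
    simp only [integral_mul_const]
  rw [e A hA, e B hB, ← sub_pos, ← integral_sub hB hA]
  have hq : ∀ p : ℝ × ℝ, 0 < f₂ p.2 * f₁ p.1 := fun p => mul_pos (hp₂ _) (hp₁ _)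
  refine (integral_pos_iff_support_of_nonneg ?_ (hB.sub hA)).2 ?_
  rotate_left
  · refine lt_of_lt_of_le (hU.measure_pos ((volume : Measure ℝ).prod (volume : Measure ℝ)) hne)
      (measure_mono ?_)
    intro p hp
    have := mul_pos (sub_pos.2 (hlt p hp)) (hq p)
    rw [Function.mem_support]
    apply ne_of_gt
    simp only [Pi.sub_apply]
    linarith
  · intro p
    have := mul_nonneg (sub_nonneg.2 (hAB p)) (hq p).le
    simp only [Pi.zero_apply, Pi.sub_apply]
    linarith

lemma aux_H (f₁ f₂ : ℝ → ℝ) (h₁ : GoodDensity f₁) (h₂ : GoodDensity f₂) (w : ℝ) :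
    Integrable (fun p : ℝ × ℝ => (if (1 - w) * p.2 ^ 2 < w * p.1 ^ 2 then p.2 ^ 2 else 0)
      * f₂ p.2 * f₁ p.1) (volume.prod volume) := by
  obtain ⟨c₁, p₁, -, i₁, m₁⟩ := h₁
  obtain ⟨c₂, p₂, -, i₂, m₂⟩ := h₂
  have hi : Integrable f₁ := by
    by_contra h
    rw [integral_undef h] at i₁
    norm_num at i₁
  refine (hi.mul_prod m₂).mono' ?_ (Filter.Eventually.of_forall ?_)
  · apply Measurable.aestronglyMeasurable
    refine (Measurable.mul (Measurable.ite ?_ (by fun_prop) (by fun_prop)) ?_).mul ?_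
    · exact measurableSet_lt (by fun_prop) (by fun_prop)
    · exact c₂.measurable.comp measurable_snd
    · exact c₁.measurable.comp measurable_fst
  · intro p
    have a := p₁ p.1
    have b := p₂ p.2
    have h : (0:ℝ) ≤ p.2 ^ 2 := sq_nonneg _
    split_ifs
    · rw [Real.norm_of_nonneg (by positivity)]
      apply le_of_eq; ring
    · simp only [zero_mul, norm_zero]
      positivity

lemma aux_G (f₁ f₂ : ℝ → ℝ) (h₁ : GoodDensity f₁) (h₂ : GoodDensity f₂) (w : ℝ) :
    Integrable (fun p : ℝ × ℝ => (if w * p.1 ^ 2 ≤ (1 - w) * p.2 ^ 2 then p.1 ^ 2 else 0)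
      * f₂ p.2 * f₁ p.1) (volume.prod volume) := by
  obtain ⟨c₁, p₁, -, i₁, m₁⟩ := h₁
  obtain ⟨c₂, p₂, -, i₂, m₂⟩ := h₂
  have hi : Integrable f₂ := by
    by_contra h
    rw [integral_undef h] at i₂
    norm_num at i₂
  refine (m₁.mul_prod hi).mono' ?_ (Filter.Eventually.of_forall ?_)
  · apply Measurable.aestronglyMeasurable
    refine (Measurable.mul (Measurable.ite ?_ (by fun_prop) (by fun_prop)) ?_).mul ?_
    · exact measurableSet_le (by fun_prop) (by fun_prop)
    · exact c₂.measurable.comp measurable_snd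
    · exact c₁.measurable.comp measurable_fst
  · intro p
    have a := p₁ p.1
    have b := p₂ p.2
    have h : (0:ℝ) ≤ p.1 ^ 2 := sq_nonneg _
    split_ifs
    · rw [Real.norm_of_nonneg (by positivity)]
      apply le_of_eq; ring
    · simp only [zero_mul, norm_zero]
      positivity

lemma aux_HG (f₁ f₂ : ℝ → ℝ) (h₁ : GoodDensity f₁) (h₂ : GoodDensity f₂)
    (w w' : ℝ) (hw : 0 < w) (hww' : w < w') (hw' : w' < 1) :
    Hfun f₁ f₂ w < Hfun f₁ f₂ w' ∧ Gfun f₁ f₂ w' < Gfun f₁ f₂ w := by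
  let U : Set (ℝ × ℝ) := {p | (1 - w') * p.2 ^ 2 < w' * p.1 ^ 2} ∩
    {p | w * p.1 ^ 2 < (1 - w) * p.2 ^ 2}
  have hU : IsOpen U := (isOpen_lt (by fun_prop) (by fun_prop)).inter
    (isOpen_lt (by fun_prop) (by fun_prop))
  have hne : U.Nonempty := by
    obtain ⟨v, hv, hv'⟩ := exists_between hww'
    have v0 : 0 < v := by linarith
    have v1 : 0 < 1 - v := by linarith
    refine ⟨(√(1 - v), √v), ?_, ?_⟩ <;>
    · simp only [mem_ofPred_eq, Real.sq_sqrt v0.le, Real.sq_sqrt v1.le]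
      nlinarith
  have mono : ∀ a b : ℝ, w * a ^ 2 ≤ w' * a ^ 2 ∧ (1 - w') * b ^ 2 ≤ (1 - w) * b ^ 2 := by
    intro a b
    constructor <;> gcongr
  constructor
  · refine aux_key f₁ f₂ h₁.2.1 h₂.2.1
      (fun p => if (1 - w) * p.2 ^ 2 < w * p.1 ^ 2 then p.2 ^ 2 else 0)
      (fun p => if (1 - w') * p.2 ^ 2 < w' * p.1 ^ 2 then p.2 ^ 2 else 0)
      (aux_H f₁ f₂ h₁ h₂ w) (aux_H f₁ f₂ h₁ h₂ w') ?_ U hU hne ?_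
    · intro p
      have := mono p.1 p.2
      have := sq_nonneg p.2
      split_ifs <;> linarith
    · rintro p ⟨hp, hp'⟩
      simp only [mem_ofPred_eq] at hp hp'
      simp only [if_pos hp, if_neg hp'.le.not_gt]
      have := sq_nonneg p.1
      by_contra hc
      have : p.2 ^ 2 = 0 := le_antisymm (not_lt.1 hc) (sq_nonneg _)
      rw [this] at hp'
      nlinarith
  · refine aux_key f₁ f₂ h₁.2.1 h₂.2.1
      (fun p => if w' * p.1 ^ 2 ≤ (1 - w') * p.2 ^ 2 then p.1 ^ 2 else 0)
      (fun p => if w * p.1 ^ 2 ≤ (1 - w) * p.2 ^ 2 then p.1 ^ 2 else 0)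
      (aux_G f₁ f₂ h₁ h₂ w') (aux_G f₁ f₂ h₁ h₂ w) ?_ U hU hne ?_
    · intro p
      have := mono p.1 p.2
      have := sq_nonneg p.1
      split_ifs <;> linarith
    · rintro p ⟨hp, hp'⟩
      simp only [mem_ofPred_eq] at hp hp'
      simp only [if_pos hp'.le, if_neg hp.not_ge]
      have := sq_nonneg p.2
      by_contra hc
      have : p.1 ^ 2 = 0 := le_antisymm (not_lt.1 hc) (sq_nonneg _)
      rw [this] at hp
      nlinarith

/-- For any `0 < w < w′ < 1`, the unique `θ*` with
`L(w∣θ*) = L(w′∣θ*)` is given by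
`θ* = (H(w′) − H(w)) / ((H(w′) − H(w)) + (G(w) − G(w′)))`, and both the numerator and the
denominator of this expression are strictly positive. -/
theorem stmt11 (f₁ f₂ : ℝ → ℝ) (hf₁ : GoodDensity f₁) (hf₂ : GoodDensity f₂)
    (w w' : ℝ) (hw : 0 < w) (hww' : w < w') (hw' : w' < 1) :
    0 < Hfun f₁ f₂ w' - Hfun f₁ f₂ w ∧
    0 < (Hfun f₁ f₂ w' - Hfun f₁ f₂ w) + (Gfun f₁ f₂ w - Gfun f₁ f₂ w') ∧
    Lfun f₁ f₂ w
        ((Hfun f₁ f₂ w' - Hfun f₁ f₂ w) /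
          ((Hfun f₁ f₂ w' - Hfun f₁ f₂ w) + (Gfun f₁ f₂ w - Gfun f₁ f₂ w'))) =
      Lfun f₁ f₂ w'
        ((Hfun f₁ f₂ w' - Hfun f₁ f₂ w) /
          ((Hfun f₁ f₂ w' - Hfun f₁ f₂ w) + (Gfun f₁ f₂ w - Gfun f₁ f₂ w'))) ∧
    ∀ θ : ℝ, Lfun f₁ f₂ w θ = Lfun f₁ f₂ w' θ →
      θ = (Hfun f₁ f₂ w' - Hfun f₁ f₂ w) /
          ((Hfun f₁ f₂ w' - Hfun f₁ f₂ w) + (Gfun f₁ f₂ w - Gfun f₁ f₂ w')) := by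
  obtain ⟨hH, hG⟩ := aux_HG f₁ f₂ hf₁ hf₂ w w' hw hww' hw'
  have hD : 0 < (Hfun f₁ f₂ w' - Hfun f₁ f₂ w) + (Gfun f₁ f₂ w - Gfun f₁ f₂ w') := by linarith
  refine ⟨by linarith, hD, ?_, ?_⟩
  · have := div_mul_cancel₀ (Hfun f₁ f₂ w' - Hfun f₁ f₂ w) hD.ne'
    unfold Lfun
    linear_combination this
  · intro θ h
    rw [eq_div_iff hD.ne']
    unfold Lfun at h
    linear_combination h
end

section
/- Let n ≥ 2 and let π be a probability density on [0,1] that is strictly positive on (0,1). Suppose the weight vector (w₁,…,wₙ) ∈ (0,1)ⁿ has two equal coordinates, w_i = w_j for some i ≠ j. Then (w₁,…,wₙ) does not minimize the ex ante expected loss 𝓛: there exists another weight vector (w₁′,…,wₙ′) ∈ (0,1)ⁿ with 𝓛(w₁′,…,wₙ′) < 𝓛(w₁,…,wₙ). Consequently any minimizer of 𝓛 over (0,1)ⁿ has pairwise distinct weights. -/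
open MeasureTheory Set

lemma aux_int {f₁ f₂ : ℝ → ℝ} (hf₁ : GoodDensity f₁) (hf₂ : GoodDensity f₂)
    (c : ℝ × ℝ → ℝ) (hc : Measurable c) (hb : ∀ p, |c p| ≤ p.1 ^ 2 + p.2 ^ 2) :
    Integrable (fun p : ℝ × ℝ => c p * f₂ p.2 * f₁ p.1) (volume.prod volume) := by
  obtain ⟨c1, p1, -, i1, m1⟩ := hf₁
  obtain ⟨c2, p2, -, i2, m2⟩ := hf₂
  have I1 : Integrable f₁ := by
    by_contra h; rw [integral_undef h] at i1; norm_num at i1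
  have I2 : Integrable f₂ := by
    by_contra h; rw [integral_undef h] at i2; norm_num at i2
  have A := (m1.mul_prod I2).add (I1.mul_prod m2)
  refine A.mono' ?_ (Filter.Eventually.of_forall fun p => ?_)
  · exact ((hc.mul (c2.measurable.comp measurable_snd)).mul
      (c1.measurable.comp measurable_fst)).aestronglyMeasurable
  · have h1 := p1 p.1
    have h2 := p2 p.2
    simp only [Pi.add_apply, norm_mul, Real.norm_eq_abs, abs_of_pos h1, abs_of_pos h2]
    have := mul_le_mul_of_nonneg_right (hb p) (mul_pos h2 h1).le
    nlinarith

lemma aux_L {f₁ f₂ : ℝ → ℝ} (hf₁ : GoodDensity f₁) (hf₂ : GoodDensity f₂) (w t : ℝ)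
    (ht : t ∈ Ioo (0 : ℝ) 1) :
    Integrable (fun p : ℝ × ℝ => (if (1 - w) * p.2 ^ 2 < w * p.1 ^ 2 then (1 - t) * p.2 ^ 2
      else t * p.1 ^ 2) * f₂ p.2 * f₁ p.1) (volume.prod volume) ∧
    Lfun f₁ f₂ w t = ∫ p : ℝ × ℝ, (if (1 - w) * p.2 ^ 2 < w * p.1 ^ 2 then (1 - t) * p.2 ^ 2
      else t * p.1 ^ 2) * f₂ p.2 * f₁ p.1 ∂(volume.prod volume) := by
  have S1 : MeasurableSet {p : ℝ × ℝ | (1 - w) * p.2 ^ 2 < w * p.1 ^ 2} :=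
    measurableSet_lt (by fun_prop) (by fun_prop)
  have S2 : MeasurableSet {p : ℝ × ℝ | w * p.1 ^ 2 ≤ (1 - w) * p.2 ^ 2} :=
    measurableSet_le (by fun_prop) (by fun_prop)
  have IH := aux_int hf₁ hf₂
    (fun p => if (1 - w) * p.2 ^ 2 < w * p.1 ^ 2 then p.2 ^ 2 else 0)
    (Measurable.ite S1 (by fun_prop) (by fun_prop)) (by
      intro p; split_ifs
      · rw [abs_of_nonneg (by positivity)]; nlinarith [sq_nonneg p.1]
      · simp; positivity)
  have IG := aux_int hf₁ hf₂
    (fun p => if w * p.1 ^ 2 ≤ (1 - w) * p.2 ^ 2 then p.1 ^ 2 else 0)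
    (Measurable.ite S2 (by fun_prop) (by fun_prop)) (by
      intro p; split_ifs
      · rw [abs_of_nonneg (by positivity)]; nlinarith [sq_nonneg p.2]
      · simp; positivity)
  have key : (fun p : ℝ × ℝ => (if (1 - w) * p.2 ^ 2 < w * p.1 ^ 2 then (1 - t) * p.2 ^ 2
      else t * p.1 ^ 2) * f₂ p.2 * f₁ p.1) = fun p =>
      t * ((if w * p.1 ^ 2 ≤ (1 - w) * p.2 ^ 2 then p.1 ^ 2 else 0) * f₂ p.2 * f₁ p.1) +
      (1 - t) * ((if (1 - w) * p.2 ^ 2 < w * p.1 ^ 2 then p.2 ^ 2 else 0) * f₂ p.2 * f₁ p.1) := by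
    funext p
    by_cases h : (1 - w) * p.2 ^ 2 < w * p.1 ^ 2
    · rw [if_pos h, if_pos h, if_neg (not_le.2 h)]; ring
    · rw [if_neg h, if_neg h, if_pos (not_lt.1 h)]; ring
  rw [key]
  refine ⟨(IG.const_mul t).add (IH.const_mul (1 - t)), ?_⟩
  rw [integral_add (IG.const_mul t) (IH.const_mul (1 - t)), integral_const_mul,
    integral_const_mul, integral_prod _ IG, integral_prod _ IH]
  simp only [Lfun, Gfun, Hfun, integral_mul_const]

lemma aux_lt {f₁ f₂ : ℝ → ℝ} (hf₁ : GoodDensity f₁) (hf₂ : GoodDensity f₂) (w t : ℝ)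
    (hw : w ∈ Ioo (0 : ℝ) 1) (ht : t ∈ Ioo (0 : ℝ) 1) (hne : w ≠ t) :
    Lfun f₁ f₂ t t < Lfun f₁ f₂ w t := by
  obtain ⟨Iw, Ew⟩ := aux_L hf₁ hf₂ w t ht
  obtain ⟨It, Et⟩ := aux_L hf₁ hf₂ t t ht
  rw [Ew, Et, ← sub_pos, ← integral_sub Iw It]
  have pos : ∀ p : ℝ × ℝ, 0 < f₂ p.2 * f₁ p.1 := fun p => mul_pos (hf₂.2.1 _) (hf₁.2.1 _)
  refine (integral_pos_iff_support_of_nonneg ?_ (Iw.sub It)).2 ?_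
  rotate_left
  · set m := (w + t) / 2 with hm
    have hm0 : 0 ≤ m := by have := hw.1; have := ht.1; linarith
    have hm1 : 0 ≤ 1 - m := by have := hw.2; have := ht.2; linarith
    rcases lt_or_gt_of_ne hne with h | h
    · have U : IsOpen ({p : ℝ × ℝ | w * p.1 ^ 2 < (1 - w) * p.2 ^ 2} ∩
          {p : ℝ × ℝ | (1 - t) * p.2 ^ 2 < t * p.1 ^ 2}) :=
        (isOpen_lt (by fun_prop) (by fun_prop)).inter (isOpen_lt (by fun_prop) (by fun_prop))
      refine (U.measure_pos (volume.prod volume) ⟨(√(1 - m), √m), ?_⟩).trans_le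
        (measure_mono ?_)
      · simp only [mem_inter_iff, Set.mem_ofPred_eq, Real.sq_sqrt hm0, Real.sq_sqrt hm1]
        constructor <;> nlinarith
      · rintro p ⟨h1, h2⟩
        rw [Set.mem_ofPred_eq] at h1 h2
        simp only [Function.mem_support, Pi.sub_apply]
        rw [if_neg (not_lt.2 h1.le), if_pos h2]
        have := mul_pos (sub_pos.2 h2) (pos p)
        apply ne_of_gt; nlinarith
    · have U : IsOpen ({p : ℝ × ℝ | (1 - w) * p.2 ^ 2 < w * p.1 ^ 2} ∩
          {p : ℝ × ℝ | t * p.1 ^ 2 < (1 - t) * p.2 ^ 2}) :=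
        (isOpen_lt (by fun_prop) (by fun_prop)).inter (isOpen_lt (by fun_prop) (by fun_prop))
      refine (U.measure_pos (volume.prod volume) ⟨(√(1 - m), √m), ?_⟩).trans_le
        (measure_mono ?_)
      · simp only [mem_inter_iff, Set.mem_ofPred_eq, Real.sq_sqrt hm0, Real.sq_sqrt hm1]
        constructor <;> nlinarith
      · rintro p ⟨h1, h2⟩
        rw [Set.mem_ofPred_eq] at h1 h2
        simp only [Function.mem_support, Pi.sub_apply]
        rw [if_pos h1, if_neg (not_lt.2 h2.le)]
        have := mul_pos (sub_pos.2 h2) (pos p)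
        apply ne_of_gt; nlinarith
  · intro p
    have hp := (pos p).le
    simp only [Pi.zero_apply, Pi.sub_apply]
    rw [sub_nonneg, mul_assoc, mul_assoc]
    refine mul_le_mul_of_nonneg_right ?_ hp
    split_ifs <;> linarith

lemma aux_main {f₁ f₂ : ℝ → ℝ} (hf₁ : GoodDensity f₁) (hf₂ : GoodDensity f₂)
    {n : ℕ}
    (π : ℝ → ℝ) (hπ_nonneg : ∀ x, 0 ≤ π x)
    (hπ_total : (∫ θ in (0 : ℝ)..1, π θ) = 1)
    (hπ_pos : ∀ x ∈ Set.Ioo (0 : ℝ) 1, 0 < π x)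
    (w : Fin n → ℝ) (hw : ∀ i, w i ∈ Set.Ioo (0 : ℝ) 1)
    (i j : Fin n) (hij : i ≠ j) (heq : w i = w j) :
    ∃ w' : Fin n → ℝ, (∀ k, w' k ∈ Set.Ioo (0 : ℝ) 1) ∧
      (∫ θ in (0 : ℝ)..1, (⨅ i, Lfun f₁ f₂ (w' i) θ) * π θ) <
      ∫ θ in (0 : ℝ)..1, (⨅ i, Lfun f₁ f₂ (w i) θ) * π θ := by
  haveI : Nonempty (Fin n) := ⟨i⟩
  obtain ⟨t, ht, htw⟩ : ∃ t ∈ Ioo (0 : ℝ) 1, t ∉ range w :=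
    (Ioo_infinite (zero_lt_one)).exists_notMem_finite (finite_range w)
  have hwt : ∀ k, w k ≠ t := fun k h => htw ⟨k, h⟩
  have Iπ : IntervalIntegrable π volume 0 1 := by
    by_contra h
    rw [intervalIntegral.integral_undef h] at hπ_total; norm_num at hπ_total
  have C : ∀ v : Fin n → ℝ, Continuous fun θ => ⨅ i, Lfun f₁ f₂ (v i) θ := by
    intro v
    simp_rw [← Finset.inf'_univ_eq_ciInf]
    refine Continuous.finset_inf'_apply _ fun k _ => ?_
    unfold Lfun; fun_prop
  have II : ∀ v : Fin n → ℝ,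
      IntervalIntegrable (fun θ => (⨅ i, Lfun f₁ f₂ (v i) θ) * π θ) volume 0 1 :=
    fun v => Iπ.continuousOn_mul (C v).continuousOn
  have B : ∀ (v : Fin n → ℝ) θ, BddBelow (range fun i => Lfun f₁ f₂ (v i) θ) :=
    fun v θ => (finite_range _).bddBelow
  set w' := Function.update w j t with hw'
  have hle : ∀ θ, (⨅ i, Lfun f₁ f₂ (w' i) θ) ≤ ⨅ i, Lfun f₁ f₂ (w i) θ := by
    intro θ
    refine le_ciInf fun k => ?_
    by_cases hk : k = j
    · refine (ciInf_le (B w' θ) i).trans_eq ?_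
      rw [hw', Function.update_of_ne hij, hk, heq]
    · refine (ciInf_le (B w' θ) k).trans_eq ?_
      rw [hw', Function.update_of_ne hk]
  have hlt : (⨅ i, Lfun f₁ f₂ (w' i) t) < ⨅ i, Lfun f₁ f₂ (w i) t := by
    obtain ⟨k, hk⟩ := exists_eq_ciInf_of_finite (f := fun i => Lfun f₁ f₂ (w i) t)
    rw [← hk]
    refine (ciInf_le (B w' t) j).trans_lt ?_
    rw [hw', Function.update_self]
    exact aux_lt hf₁ hf₂ _ _ (hw k) ht (hwt k)
  refine ⟨w', fun k => ?_, ?_⟩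
  · by_cases hk : k = j
    · rw [hw', hk, Function.update_self]; exact ht
    · rw [hw', Function.update_of_ne hk]; exact hw k
  · rw [← sub_pos, ← intervalIntegral.integral_sub (II w) (II w'),
      intervalIntegral.integral_pos_iff_support_of_nonneg_ae
        (Filter.Eventually.of_forall fun θ => ?_) ((II w).sub (II w'))]
    · refine ⟨zero_lt_one, ?_⟩
      have U : IsOpen (Ioo (0 : ℝ) 1 ∩
          {θ | (⨅ i, Lfun f₁ f₂ (w' i) θ) < ⨅ i, Lfun f₁ f₂ (w i) θ}) :=
        isOpen_Ioo.inter (isOpen_lt (C w') (C w))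
      refine (U.measure_pos volume ⟨t, ht, hlt⟩).trans_le (measure_mono ?_)
      rintro θ ⟨h1, h2⟩
      refine ⟨?_, Ioo_subset_Ioc_self h1⟩
      rw [Function.mem_support, ← sub_mul]
      exact (mul_pos (sub_pos.2 h2) (hπ_pos θ h1)).ne'
    · simp only [Pi.zero_apply]
      rw [← sub_mul]
      exact mul_nonneg (sub_nonneg.2 (hle θ)) (hπ_nonneg θ)

/-- Let `n ≥ 2` and let `π` be a probability density on `[0,1]`
strictly positive on `(0,1)`. If the weight vector `(w₁,…,wₙ) ∈ (0,1)ⁿ` has two equal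
coordinates, then it does not minimize the ex ante expected loss `𝓛`: some other weight
vector in `(0,1)ⁿ` achieves strictly smaller `𝓛`. Consequently any minimizer of `𝓛`
over `(0,1)ⁿ` has pairwise distinct weights. -/
theorem stmt15 (f₁ f₂ : ℝ → ℝ) (hf₁ : GoodDensity f₁) (hf₂ : GoodDensity f₂)
    (n : ℕ) (hn : 2 ≤ n)
    (π : ℝ → ℝ) (hπ_meas : Measurable π) (hπ_nonneg : ∀ x, 0 ≤ π x)
    (hπ_total : (∫ θ in (0 : ℝ)..1, π θ) = 1)
    (hπ_pos : ∀ x ∈ Set.Ioo (0 : ℝ) 1, 0 < π x)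
    (𝓛 : (Fin n → ℝ) → ℝ)
    (h𝓛 : ∀ v : Fin n → ℝ, 𝓛 v = ∫ θ in (0 : ℝ)..1, (⨅ i, Lfun f₁ f₂ (v i) θ) * π θ)
    (w : Fin n → ℝ) (hw : ∀ i, w i ∈ Set.Ioo (0 : ℝ) 1)
    (i j : Fin n) (hij : i ≠ j) (heq : w i = w j) :
    (∃ w' : Fin n → ℝ, (∀ k, w' k ∈ Set.Ioo (0 : ℝ) 1) ∧ 𝓛 w' < 𝓛 w) ∧
    (∀ v : Fin n → ℝ, (∀ k, v k ∈ Set.Ioo (0 : ℝ) 1) →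
      (∀ u : Fin n → ℝ, (∀ k, u k ∈ Set.Ioo (0 : ℝ) 1) → 𝓛 v ≤ 𝓛 u) →
      Function.Injective v) := by
  refine ⟨?_, ?_⟩
  · simp only [h𝓛]
    exact aux_main hf₁ hf₂ π hπ_nonneg hπ_total hπ_pos w hw i j hij heq
  · intro v hv hmin a b hab
    by_contra hne
    obtain ⟨u, hu, hlt⟩ := aux_main hf₁ hf₂ π hπ_nonneg hπ_total hπ_pos v hv a b hne hab
    rw [← h𝓛, ← h𝓛] at hlt
    exact absurd (hmin u hu) (not_le.2 hlt)
end
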